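/- arXiv:2209.13576 — 2 statements merged into one kernel-verified Lean document; each statement's English description precedes it below -/
import Mathlib

section
/- Let X be a complex Banach space, let A be a closed linear operator in X, and let R : (0,∞) → L(X) be strongly continuous with ∫₀^∞ ‖R(t)‖ dt < ∞ and such that for every t > 0 and x ∈ D(A): R(t)x ∈ D(A) and A R(t)x = R(t)Ax. Let ∅ ≠ Λ' ⊆ ℝ, and let f : ℝ → X be bounded and continuous with f(s) ∈ D(A) for all s and with Af bounded. Suppose that for every ε > 0 and every compact set K ⊆ ℝ there exists l > 0 such that for each t₀ ∈ Λ' there is τ ∈ [t₀ − l, t₀ + l] ∩ Λ' with sup_{t∈K} ‖f(t+τ) − Af(t)‖ ≤ ε. Then F(t) := ∫_{−∞}^t R(t−s) f(s) ds is bounded and continuous, F(t) ∈ D(A) for all t, and F has the same property: for every ε > 0 and every compact K ⊆ ℝ there exists l > 0 such that for each t₀ ∈ Λ' there is τ ∈ [t₀ − l, t₀ + l] ∩ Λ' with sup_{t∈K} ‖F(t+τ) − AF(t)‖ ≤ ε. -/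
open MeasureTheory Filter Topology

/-- A strongly continuous operator family applied to a continuous function is continuous. -/
theorem continuousOn_strong_apply {X : Type*} [NormedAddCommGroup X] [NormedSpace ℂ X]
    [CompleteSpace X] {R : ℝ → X →L[ℂ] X}
    (hR : ∀ x : X, ContinuousOn (fun t => R t x) (Set.Ioi 0)) {g : ℝ → X} (hg : Continuous g) :
    ContinuousOn (fun s => R s (g s)) (Set.Ioi 0) := by
  intro s hs
  have hs : 0 < s := hs
  obtain ⟨C, hC⟩ : ∃ C, ∀ r : Set.Icc (s / 2) (s + 1), ‖R r‖ ≤ C := by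
    refine banach_steinhaus fun x => ?_
    obtain ⟨C, hC⟩ := isCompact_Icc.exists_bound_of_continuousOn
      ((hR x).mono fun r (hr : r ∈ Set.Icc (s / 2) (s + 1)) =>
        (half_pos hs).trans_le hr.1)
    exact ⟨C, fun r => hC r r.2⟩
  have hmem : Set.Icc (s / 2) (s + 1) ∈ 𝓝 s := Icc_mem_nhds (by linarith) (by linarith)
  have hg0 : Tendsto (fun r => C * ‖g r - g s‖) (𝓝 s) (𝓝 0) := by
    have : Continuous fun r => C * ‖g r - g s‖ := by fun_prop
    simpa using this.tendsto s
  have hdiff : Tendsto (fun r => R r (g r - g s)) (𝓝 s) (𝓝 0) := by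
    refine squeeze_zero_norm' ?_ hg0
    filter_upwards [hmem] with r hr
    exact (R r).le_of_opNorm_le (hC ⟨r, hr⟩) _
  have hconst : Tendsto (fun r => R r (g s)) (𝓝 s) (𝓝 (R s (g s))) :=
    (hR (g s)).continuousAt (Ioi_mem_nhds hs)
  refine ContinuousAt.continuousWithinAt ?_
  simpa [ContinuousAt] using hdiff.add hconst

/-- A strongly continuous, norm integrable operator family applied to a bounded continuous
function is integrable. -/
theorem integrableOn_strong_apply {X : Type*} [NormedAddCommGroup X] [NormedSpace ℂ X]
    [CompleteSpace X] {R : ℝ → X →L[ℂ] X}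
    (hR : ∀ x : X, ContinuousOn (fun t => R t x) (Set.Ioi 0))
    (hRint : IntegrableOn (fun t => ‖R t‖) (Set.Ioi 0)) {g : ℝ → X} (hg : Continuous g)
    {C : ℝ} (hC : ∀ s, ‖g s‖ ≤ C) :
    IntegrableOn (fun s => R s (g s)) (Set.Ioi 0) :=
  (hRint.mul_const C).mono'
    ((continuousOn_strong_apply hR hg).aestronglyMeasurable measurableSet_Ioi)
    (Eventually.of_forall fun s => (R s).le_opNorm_of_le (hC s))

/-- The Bochner integral of a function with values in a closed subspace lies in it. -/
theorem integral_mem_of_isClosed_submodule {α E : Type*} [MeasurableSpace α] {μ : Measure α}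
    [NormedAddCommGroup E] [NormedSpace ℂ E] [CompleteSpace E] (S : Submodule ℂ E)
    (hS : IsClosed (S : Set E)) {g : α → E} (hg : Integrable g μ) (hgS : ∀ᵐ a ∂μ, g a ∈ S) :
    ∫ a, g a ∂μ ∈ S := by
  have : IsClosed (S : Set E) := hS
  let L : E →L[ℂ] E ⧸ S := ⟨S.mkQ, continuous_quot_mk⟩
  have hL : ∀ x, L x = 0 ↔ x ∈ S := fun x => Submodule.Quotient.mk_eq_zero S
  rw [← hL, ← L.integral_comp_comm hg]
  exact integral_eq_zero_of_ae (hgS.mono fun a ha => (hL _).2 ha)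

/-- The integral over the tail `(n, ∞)` of a function integrable on `(0, ∞)` is eventually
small. -/
theorem exists_setIntegral_Ioi_lt {g : ℝ → ℝ} (hg : IntegrableOn g (Set.Ioi 0)) {δ : ℝ}
    (hδ : 0 < δ) : ∃ a : ℝ, 0 ≤ a ∧ ∫ s in Set.Ioi a, g s < δ := by
  have h := tendsto_setIntegral_of_antitone (μ := volume) (f := g)
    (s := fun n : ℕ => Set.Ioi (n : ℝ)) (fun n => measurableSet_Ioi)
    (fun m n hmn => Set.Ioi_subset_Ioi (by exact_mod_cast hmn)) ⟨0, by simpa using hg⟩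
  have hempty : ⋂ n : ℕ, Set.Ioi (n : ℝ) = ∅ := by
    refine Set.eq_empty_of_forall_notMem fun x hx => ?_
    obtain ⟨n, hn⟩ := exists_nat_gt x
    exact lt_asymm hn (Set.mem_iInter.1 hx n)
  rw [hempty, setIntegral_empty] at h
  obtain ⟨n, hn⟩ := (h.eventually_lt_const hδ).exists
  exact ⟨n, n.cast_nonneg, hn⟩

/-- A function that is, locally uniformly, a limit of translates of a continuous function is
continuous. -/
theorem continuous_of_forall_translate_approx {X : Type*} [NormedAddCommGroup X] {f g : ℝ → X}
    (hf : Continuous f)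
    (h : ∀ ε > (0 : ℝ), ∀ K : Set ℝ, IsCompact K → ∃ τ, ∀ t ∈ K, ‖f (t + τ) - g t‖ ≤ ε) :
    Continuous g := by
  refine continuous_iff_continuousAt.2 fun x => ?_
  refine continuousAt_of_locally_uniform_approx_of_continuousAt fun u hu => ?_
  obtain ⟨ε, hε, hεu⟩ := Metric.mem_uniformity_dist.1 hu
  obtain ⟨τ, hτ⟩ := h (ε / 2) (half_pos hε) (Metric.closedBall x 1) (isCompact_closedBall x 1)
  refine ⟨Metric.closedBall x 1, Metric.closedBall_mem_nhds x one_pos, fun t => f (t + τ),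
    by fun_prop, fun t ht => hεu ?_⟩
  rw [dist_comm, dist_eq_norm]
  linarith [hτ t ht]

/-- Invariance of Levitan-type metrical almost periodicity (with respect to the binary
relation given by a closed linear operator `A` and a set `Λ'` of admissible almost
periods) under the infinite convolution product `F(t) = ∫_{-∞}^t R(t−s) f(s) ds`. -/
theorem stmt5 {X : Type*} [NormedAddCommGroup X] [NormedSpace ℂ X] [CompleteSpace X]
    (A : X →ₗ.[ℂ] X) (hA : IsClosed (A.graph : Set (X × X)))
    (R : ℝ → X →L[ℂ] X)
    (hRsc : ∀ x : X, ContinuousOn (fun t => R t x) (Set.Ioi 0))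
    (hRint : IntegrableOn (fun t => ‖R t‖) (Set.Ioi 0))
    (hRA : ∀ t ∈ Set.Ioi (0 : ℝ), ∀ x y : X, (x, y) ∈ A.graph → (R t x, R t y) ∈ A.graph)
    (Λ' : Set ℝ) (hΛ' : Λ'.Nonempty)
    (f Af : ℝ → X) (hfc : Continuous f) (hfb : ∃ C, ∀ s, ‖f s‖ ≤ C)
    (hgraph : ∀ s, (f s, Af s) ∈ A.graph) (hAfb : ∃ C, ∀ s, ‖Af s‖ ≤ C)
    (hlev : ∀ ε > (0 : ℝ), ∀ K : Set ℝ, IsCompact K → ∃ l > (0 : ℝ), ∀ t₀ ∈ Λ',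
      ∃ τ ∈ Set.Icc (t₀ - l) (t₀ + l) ∩ Λ', ∀ t ∈ K, ‖f (t + τ) - Af t‖ ≤ ε) :
    (∀ t : ℝ, IntegrableOn (fun s => R s (f (t - s))) (Set.Ioi 0)) ∧
    Continuous (fun t => ∫ s in Set.Ioi (0 : ℝ), R s (f (t - s))) ∧
    (∃ C, ∀ t, ‖∫ s in Set.Ioi (0 : ℝ), R s (f (t - s))‖ ≤ C) ∧
    (∀ t : ℝ, ((∫ s in Set.Ioi (0 : ℝ), R s (f (t - s))),
        ∫ s in Set.Ioi (0 : ℝ), R s (Af (t - s))) ∈ A.graph) ∧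
    (∀ ε > (0 : ℝ), ∀ K : Set ℝ, IsCompact K → ∃ l > (0 : ℝ), ∀ t₀ ∈ Λ',
      ∃ τ ∈ Set.Icc (t₀ - l) (t₀ + l) ∩ Λ', ∀ t ∈ K,
        ‖(∫ s in Set.Ioi (0 : ℝ), R s (f (t + τ - s))) -
          ∫ s in Set.Ioi (0 : ℝ), R s (Af (t - s))‖ ≤ ε) := by
  obtain ⟨Cf, hCf⟩ := hfb
  obtain ⟨Ca, hCa⟩ := hAfb
  have hCf0 : 0 ≤ Cf := (norm_nonneg _).trans (hCf 0)
  have hCa0 : 0 ≤ Ca := (norm_nonneg _).trans (hCa 0)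
  have hAfc : Continuous Af := by
    refine continuous_of_forall_translate_approx hfc fun ε hε K hK => ?_
    obtain ⟨l, -, hl⟩ := hlev ε hε K hK
    obtain ⟨t₀, ht₀⟩ := hΛ'
    obtain ⟨τ, -, hτ⟩ := hl t₀ ht₀
    exact ⟨τ, hτ⟩
  have hfint (t : ℝ) : IntegrableOn (fun s => R s (f (t - s))) (Set.Ioi 0) :=
    integrableOn_strong_apply hRsc hRint (g := fun s => f (t - s)) (by fun_prop)
      fun s => hCf (t - s)
  have hAfint (t : ℝ) : IntegrableOn (fun s => R s (Af (t - s))) (Set.Ioi 0) :=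
    integrableOn_strong_apply hRsc hRint (g := fun s => Af (t - s)) (by fun_prop)
      fun s => hCa (t - s)
  refine ⟨hfint, ?_, ?_, ?_, ?_⟩
  · refine continuous_of_dominated (fun t => (hfint t).aestronglyMeasurable)
      (fun t => Eventually.of_forall fun s => (R s).le_opNorm_of_le (hCf (t - s)))
      (hRint.mul_const Cf) (Eventually.of_forall fun s => by fun_prop)
  · exact ⟨∫ s in Set.Ioi (0 : ℝ), ‖R s‖ * Cf, fun t =>
      norm_integral_le_of_norm_le (hRint.mul_const Cf)
        (Eventually.of_forall fun s => (R s).le_opNorm_of_le (hCf (t - s)))⟩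
  · intro t
    have hmem := integral_mem_of_isClosed_submodule A.graph hA
      (Integrable.prodMk (hfint t) (hAfint t))
      ((ae_restrict_mem measurableSet_Ioi).mono fun s hs => hRA s hs _ _ (hgraph (t - s)))
    rwa [integral_pair (hfint t) (hAfint t)] at hmem
  · intro ε hε K hK
    set M := ∫ s in Set.Ioi (0 : ℝ), ‖R s‖ with hM
    have hM0 : 0 ≤ M := integral_nonneg fun s => norm_nonneg _
    have hC1 : 0 < Cf + Ca + 1 := by linarith
    obtain ⟨a, ha0, ha⟩ := exists_setIntegral_Ioi_lt hRint
      (δ := ε / (2 * (Cf + Ca + 1))) (by positivity)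
    obtain ⟨l, hl, hlτ⟩ := hlev (ε / (2 * (M + 1))) (by positivity)
      ((fun p : ℝ × ℝ => p.1 - p.2) '' (K ×ˢ Set.Icc 0 a))
      ((hK.prod isCompact_Icc).image (by fun_prop))
    refine ⟨l, hl, fun t₀ ht₀ => ?_⟩
    obtain ⟨τ, hτmem, hτ⟩ := hlτ t₀ ht₀
    refine ⟨τ, hτmem, fun t ht => ?_⟩
    have hind : IntegrableOn ((Set.Ioi a).indicator fun s => ‖R s‖) (Set.Ioi 0) :=
      hRint.indicator measurableSet_Ioi
    have hbound : ∀ s ∈ Set.Ioi (0 : ℝ), ‖R s (f (t + τ - s)) - R s (Af (t - s))‖ ≤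
        ‖R s‖ * (ε / (2 * (M + 1))) +
          (Set.Ioi a).indicator (fun s => ‖R s‖) s * (Cf + Ca + 1) := by
      intro s hs
      rw [← map_sub]
      by_cases hsa : a < s
      · rw [Set.indicator_of_mem (show s ∈ Set.Ioi a from hsa)]
        have hnorm : ‖f (t + τ - s) - Af (t - s)‖ ≤ Cf + Ca + 1 :=
          (norm_sub_le _ _).trans (by linarith [hCf (t + τ - s), hCa (t - s)])
        have hnonneg : 0 ≤ ‖R s‖ * (ε / (2 * (M + 1))) := by positivity
        linarith [(R s).le_opNorm_of_le hnorm]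
      · rw [Set.indicator_of_notMem (show s ∉ Set.Ioi a from hsa), zero_mul, add_zero]
        refine (R s).le_opNorm_of_le ?_
        have h := hτ (t - s) ⟨(t, s), ⟨ht, (show 0 < s from hs).le, not_lt.1 hsa⟩, rfl⟩
        rwa [sub_add_eq_add_sub] at h
    have htail : ∫ s in Set.Ioi (0 : ℝ), (Set.Ioi a).indicator (fun s => ‖R s‖) s =
        ∫ s in Set.Ioi a, ‖R s‖ := by
      rw [setIntegral_indicator measurableSet_Ioi,
        Set.inter_eq_right.2 (Set.Ioi_subset_Ioi ha0)]
    rw [← integral_sub (hfint (t + τ)) (hAfint t)]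
    calc ‖∫ s in Set.Ioi (0 : ℝ), (R s (f (t + τ - s)) - R s (Af (t - s)))‖
        ≤ ∫ s in Set.Ioi (0 : ℝ), (‖R s‖ * (ε / (2 * (M + 1))) +
          (Set.Ioi a).indicator (fun s => ‖R s‖) s * (Cf + Ca + 1)) :=
          norm_integral_le_of_norm_le ((hRint.mul_const _).add (hind.mul_const _))
            ((ae_restrict_mem measurableSet_Ioi).mono hbound)
      _ = M * (ε / (2 * (M + 1))) + (∫ s in Set.Ioi a, ‖R s‖) * (Cf + Ca + 1) := by
          rw [integral_add (hRint.mul_const _) (hind.mul_const _), integral_mul_const,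
            integral_mul_const, htail]
      _ ≤ (M + 1) * (ε / (2 * (M + 1))) + ε / (2 * (Cf + Ca + 1)) * (Cf + Ca + 1) := by
          gcongr
          linarith
      _ = ε := by field_simp; ring
end

section
/- Let X be a complex Banach space and F : ℝⁿ → X continuous. Then F is Levitan N-almost periodic of type 1 if and only if F is strongly Levitan N-almost periodic. -/
open Real Filter Topology

/-- A set `E ⊆ ℝⁿ` is relatively dense if there is `l > 0` such that every closed
ball of radius `l` meets `E`. -/
def RelativelyDense {n : ℕ} (E : Set (EuclideanSpace ℝ (Fin n))) : Prop :=
  ∃ l > (0 : ℝ), ∀ x : EuclideanSpace ℝ (Fin n), ∃ τ ∈ E, ‖τ - x‖ ≤ l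

/-- A set `E ⊆ ℝ` is relatively dense if there is `l > 0` such that every closed
interval of length `2l` meets `E`. -/
def RelativelyDenseR (E : Set ℝ) : Prop :=
  ∃ l > (0 : ℝ), ∀ x : ℝ, ∃ e ∈ E, |e - x| ≤ l

/-- The set `E(ε, N)` of all `(ε, N)`-almost periods of `F`. -/
def AlmostPeriodSet {n : ℕ} {X : Type*} [NormedAddCommGroup X]
    (F : EuclideanSpace ℝ (Fin n) → X) (ε N : ℝ) : Set (EuclideanSpace ℝ (Fin n)) :=
  {τ | ∀ t, ‖t‖ ≤ N → ‖F (t + τ) - F t‖ ≤ ε}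

/-- `F` is Levitan pre-almost periodic: `E(ε, N)` is relatively dense for all `ε, N > 0`. -/
def LevitanPreAP {n : ℕ} {X : Type*} [NormedAddCommGroup X]
    (F : EuclideanSpace ℝ (Fin n) → X) : Prop :=
  ∀ ε > (0 : ℝ), ∀ N > (0 : ℝ), RelativelyDense (AlmostPeriodSet F ε N)

/-- `F` is strongly Levitan `N`-almost periodic: it is Levitan pre-almost periodic and,
for every `N, ε > 0`, there exist `η > 0` and relatively dense sets `E¹, …, Eⁿ ⊆ ℝ`
whose product consists of `(η, N)`-almost periods of `F` and satisfies
`E ± E ⊆ E(ε, N)`. -/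
def StronglyLevitanNAP {n : ℕ} {X : Type*} [NormedAddCommGroup X]
    (F : EuclideanSpace ℝ (Fin n) → X) : Prop :=
  LevitanPreAP F ∧
    ∀ N > (0 : ℝ), ∀ ε > (0 : ℝ), ∃ η > (0 : ℝ), ∃ E : Fin n → Set ℝ,
      (∀ j, RelativelyDenseR (E j)) ∧
      (∀ τ : EuclideanSpace ℝ (Fin n), (∀ j, τ j ∈ E j) → τ ∈ AlmostPeriodSet F η N) ∧
      (∀ a b : EuclideanSpace ℝ (Fin n), (∀ j, a j ∈ E j) → (∀ j, b j ∈ E j) →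
        a + b ∈ AlmostPeriodSet F ε N ∧ a - b ∈ AlmostPeriodSet F ε N)

/-- `F` is Levitan `N`-almost periodic of type `1` (Marchenko): for each `j` there is a
real sequence `(λ^j_l)` such that, for every `N, ε > 0`, there exist `k ∈ ℕ` and `δ > 0`
such that every `τ ∈ ℝⁿ` with `dist(λ^j_l τ_j, 2πℤ) ≤ δ` for all `l < k`, `j`, is an
`(ε, N)`-almost period of `F`. -/
def LevitanType1 {n : ℕ} {X : Type*} [NormedAddCommGroup X]
    (F : EuclideanSpace ℝ (Fin n) → X) : Prop :=
  ∃ lam : Fin n → ℕ → ℝ, ∀ N > (0 : ℝ), ∀ ε > (0 : ℝ), ∃ k : ℕ, ∃ δ > (0 : ℝ),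
    ∀ τ : EuclideanSpace ℝ (Fin n),
      (∀ l < k, ∀ j : Fin n, ∃ m : ℤ, |lam j l * τ j - 2 * Real.pi * m| ≤ δ) →
      τ ∈ AlmostPeriodSet F ε N

/-- **Bogolyubov's lemma** in `ZMod q`: if `A` has density at least `√(2/K)`, then `2A - 2A` contains
a Bohr set defined by `K` frequencies. -/
theorem ZMod.bogolyubov {q : ℕ} [NeZero q] (A : Finset (ZMod q)) (hA : A.Nonempty) (K : ℕ)
    (hK : 2 * q ^ 2 ≤ K * A.card ^ 2) :
    ∃ f : Fin K → ZMod q, ∀ x : ZMod q, (∀ i, 0 ≤ (ZMod.stdAddChar (f i * x)).re) →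
      ∃ a ∈ A, ∃ b ∈ A, ∃ c ∈ A, ∃ d ∈ A, x = a - b + (c - d) := by
  classical
  set S : ZMod q → ℂ := fun r => ∑ a ∈ A, ZMod.stdAddChar (r * a) with hS
  set P : ZMod q → ℝ := fun r => Complex.normSq (S r) with hP
  have hP0 : ∀ r, 0 ≤ P r := fun r => Complex.normSq_nonneg _
  have hPC : ∀ r, (P r : ℂ) = ∑ a ∈ A, ∑ b ∈ A, ZMod.stdAddChar (r * (a - b)) := by
    intro r
    simp only [hP, hS]
    rw [← Complex.mul_conj, map_sum, Finset.sum_mul_sum]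
    refine Finset.sum_congr rfl fun a _ => Finset.sum_congr rfl fun b _ => ?_
    rw [← AddChar.map_neg_eq_conj, ← AddChar.map_add_eq_mul]
    congr 1
    ring
  have hqpos : (0 : ℝ) < q := by exact_mod_cast Nat.pos_of_ne_zero (NeZero.ne q)
  have hApos : (0 : ℝ) < A.card := by exact_mod_cast hA.card_pos
  have hsum : ∑ r, P r = q * A.card := by
    have : ((∑ r, P r : ℝ) : ℂ) = ((q * A.card : ℝ) : ℂ) := by
      push_cast
      simp only [hPC]
      rw [Finset.sum_comm]
      simp_rw [Finset.sum_comm (s := Finset.univ)]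
      simp only [AddChar.sum_mulShift _ (ZMod.isPrimitive_stdAddChar q), sub_eq_zero, ZMod.card]
      simp [mul_comm]
    exact_mod_cast this
  set c : ℝ := (A.card : ℝ) ^ 3 / (2 * q) with hc
  have hcpos : 0 < c := by positivity
  set T : Finset (ZMod q) := Finset.univ.filter fun r => c ≤ P r with hT
  have hTcard : T.card ≤ K := by
    have h1 : T.card * c ≤ q * A.card := by
      rw [← hsum, ← nsmul_eq_mul]
      refine (Finset.card_nsmul_le_sum T P c fun r hr => (Finset.mem_filter.1 hr).2).trans ?_
      exact Finset.sum_le_sum_of_subset_of_nonneg (Finset.subset_univ _) fun r _ _ => hP0 r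
    have h2 : (2 : ℝ) * q ^ 2 ≤ K * A.card ^ 2 := by exact_mod_cast hK
    have h3 : (T.card : ℝ) * A.card ^ 2 ≤ 2 * q ^ 2 := by
      rw [hc, mul_div_assoc', div_le_iff₀ (by positivity)] at h1
      have : (A.card : ℝ) * (T.card * A.card ^ 2) ≤ A.card * (2 * q ^ 2) := by nlinarith
      exact le_of_mul_le_mul_left this hApos
    have h4 : (T.card : ℝ) ≤ K := le_of_mul_le_mul_right (h3.trans h2) (by positivity)
    exact_mod_cast h4
  refine ⟨fun i => if h : (i : ℕ) < T.card then T.equivFin.symm ⟨i, h⟩ else 0, fun x hx => ?_⟩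
  have hxT : ∀ r ∈ T, 0 ≤ (ZMod.stdAddChar (r * x)).re := by
    intro r hr
    have := hx ⟨T.equivFin ⟨r, hr⟩, (Fin.is_lt _).trans_le hTcard⟩
    simpa using this
  by_contra! hcon
  have hzero : ∑ r, P r ^ 2 * (ZMod.stdAddChar (r * x)).re = 0 := by
    have : ∑ r, ((P r : ℂ) * P r) * ZMod.stdAddChar (r * x) = 0 := by
      have hterm : ∀ r, ((P r : ℂ) * P r) * ZMod.stdAddChar (r * x) =
          ∑ a ∈ A, ∑ b ∈ A, ∑ c ∈ A, ∑ d ∈ A,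
            ZMod.stdAddChar (r * (a - b + (c - d) + x)) := by
        intro r
        rw [hPC, Finset.sum_mul, Finset.sum_mul]
        refine Finset.sum_congr rfl fun a _ => ?_
        rw [Finset.sum_mul, Finset.sum_mul]
        refine Finset.sum_congr rfl fun b _ => ?_
        rw [Finset.mul_sum, Finset.sum_mul]
        refine Finset.sum_congr rfl fun c _ => ?_
        rw [Finset.mul_sum, Finset.sum_mul]
        refine Finset.sum_congr rfl fun d _ => ?_
        simp only [mul_add, AddChar.map_add_eq_mul]
      simp only [hterm]
      rw [Finset.sum_comm]
      refine Finset.sum_eq_zero fun a ha => ?_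
      rw [Finset.sum_comm]
      refine Finset.sum_eq_zero fun b hb => ?_
      rw [Finset.sum_comm]
      refine Finset.sum_eq_zero fun c hc => ?_
      rw [Finset.sum_comm]
      refine Finset.sum_eq_zero fun d hd => ?_
      rw [AddChar.sum_mulShift _ (ZMod.isPrimitive_stdAddChar q), if_neg]
      · simp
      · intro h
        exact hcon b hb a ha d hd c hc (by linear_combination h)
    have hre := congrArg Complex.re this
    rw [Complex.re_sum, Complex.zero_re] at hre
    rw [← hre]
    refine Finset.sum_congr rfl fun r _ => ?_
    rw [← Complex.ofReal_mul, Complex.re_ofReal_mul, sq]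
  have hPzero : P 0 = (A.card : ℝ) ^ 2 := by
    simp [hP, hS, Complex.normSq_natCast, sq]
  have hlow : ∀ r, (if r = 0 then (A.card : ℝ) ^ 4 else 0) - c * P r ≤
      P r ^ 2 * (ZMod.stdAddChar (r * x)).re := by
    intro r
    have hcP : 0 ≤ c * P r := mul_nonneg hcpos.le (hP0 r)
    split_ifs with h
    · subst h
      rw [hPzero] at hcP ⊢
      simp only [zero_mul, AddChar.map_zero_eq_one, Complex.one_re]
      nlinarith
    · by_cases hr : r ∈ T
      · have := mul_nonneg (sq_nonneg (P r)) (hxT r hr)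
        linarith
      · have hr' : P r < c := by simpa [hT] using hr
        have hre : -1 ≤ (ZMod.stdAddChar (r * x)).re := by
          have := Complex.abs_re_le_norm (ZMod.stdAddChar (r * x))
          rw [AddChar.norm_apply] at this
          exact (abs_le.1 this).1
        nlinarith [hP0 r, sq_nonneg (P r), mul_nonneg (hP0 r) (sub_nonneg.2 hr'.le)]
  have := Finset.sum_le_sum fun r (_ : r ∈ Finset.univ) => hlow r
  rw [hzero, Finset.sum_sub_distrib, ← Finset.mul_sum, hsum, Finset.sum_ite_eq' Finset.univ,
    if_pos (Finset.mem_univ _)] at this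
  have hcq : c * (q * A.card) = (A.card : ℝ) ^ 4 / 2 := by
    rw [hc]; field_simp
  have : (0 : ℝ) < (A.card : ℝ) ^ 4 := by positivity
  linarith

/-- A syndetic set `A` of integers has a Bohr neighbourhood of `0` inside `2A - 2A`. -/
theorem Int.exists_bohr_subset_of_syndetic (A : Set ℤ) (L : ℕ) (hL : 0 < L)
    (hA : ∀ x : ℤ, ∃ a ∈ A, x ≤ a ∧ a < x + L) :
    ∃ K : ℕ, ∃ θ : Fin K → ℝ, ∀ x : ℤ, (∀ i, 0 < Real.cos (2 * Real.pi * θ i * x)) →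
      ∃ a ∈ A, ∃ b ∈ A, ∃ c ∈ A, ∃ d ∈ A, x = a - b + (c - d) := by
  classical
  have key : ∀ M : ℕ, ∃ θ : Fin (32 * L ^ 2) → ℝ, (∀ i, θ i ∈ Set.Icc (0 : ℝ) 1) ∧
      ∀ x : ℤ, |x| < M → (∀ i, 0 ≤ Real.cos (2 * Real.pi * θ i * x)) →
        ∃ a ∈ A, ∃ b ∈ A, ∃ c ∈ A, ∃ d ∈ A, x = a - b + (c - d) := by
    intro M
    rcases Nat.eq_zero_or_pos M with rfl | hM
    · exact ⟨0, by simp, fun x hx => absurd hx (by simp)⟩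
    set q : ℕ := 4 * (L * M) with hq
    have hLM : 0 < L * M := Nat.mul_pos hL hM
    have : NeZero q := ⟨by omega⟩
    choose g hgA hg1 hg2 using hA
    set B : Finset (ZMod q) :=
      (Finset.range M).image fun k : ℕ => ((g ((L : ℤ) * k) : ℤ) : ZMod q) with hB
    have hgb : ∀ k < M, 0 ≤ g ((L : ℤ) * k) ∧ g ((L : ℤ) * k) < L * M := by
      intro k hk
      have h1 := hg1 ((L : ℤ) * k)
      have h2 := hg2 ((L : ℤ) * k)
      have h3 : (L : ℤ) * (k + 1) ≤ L * M := by
        have : (k : ℤ) + 1 ≤ M := by exact_mod_cast hk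
        gcongr
      constructor
      · have : (0 : ℤ) ≤ L * k := by positivity
        omega
      · linarith
    have hinjZ : ∀ u v : ℤ, |u - v| < q → (u : ZMod q) = v → u = v := by
      intro u v huv h
      rw [ZMod.intCast_eq_intCast_iff_dvd_sub] at h
      have := Int.eq_zero_of_abs_lt_dvd h (by rwa [abs_sub_comm])
      omega
    have hqZ : (q : ℤ) = 4 * (L * M) := by rw [hq]; push_cast; ring
    have hcard : B.card = M := by
      rw [hB, Finset.card_image_of_injOn, Finset.card_range]
      intro k hk l hl hkl
      have hk' := Finset.mem_range.1 (Finset.mem_coe.1 hk)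
      have hl' := Finset.mem_range.1 (Finset.mem_coe.1 hl)
      have h := hinjZ _ _ (by
        have := hgb k hk'
        have := hgb l hl'
        rw [abs_lt]
        constructor <;> linarith) hkl
      by_contra hne
      wlog hlt : k < l generalizing k l
      · exact this hl hk hkl.symm hl' hk' h.symm (Ne.symm hne) (by omega)
      have h1 := hg2 ((L : ℤ) * k)
      have h2 := hg1 ((L : ℤ) * l)
      have h3 : (L : ℤ) * (k + 1) ≤ L * l := by
        have : (k : ℤ) + 1 ≤ l := by exact_mod_cast hlt
        gcongr
      linarith
    obtain ⟨f, hf⟩ := ZMod.bogolyubov B (Finset.card_pos.1 (hcard ▸ hM)) (32 * L ^ 2)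
      (by rw [hcard, hq]; apply le_of_eq; ring)
    have hqpos : (0 : ℝ) < q := by exact_mod_cast Nat.pos_of_ne_zero (NeZero.ne q)
    refine ⟨fun i => (f i).val / q, fun i => ⟨by positivity, ?_⟩, fun x hxM hx => ?_⟩
    · rw [div_le_one hqpos]
      exact_mod_cast (ZMod.val_lt (f i)).le
    · obtain ⟨a, ha, b, hb, c, hc, d, hd, h⟩ := hf (x : ZMod q) fun i => by
        have h1 : f i * (x : ZMod q) = (((f i).val * x : ℤ) : ZMod q) := by
          push_cast; rw [ZMod.natCast_zmod_val]
        rw [h1, ZMod.stdAddChar_coe]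
        have h2 : 2 * (Real.pi : ℂ) * Complex.I * (((f i).val * x : ℤ) : ℂ) / q =
            ((2 * Real.pi * ((f i).val / q) * x : ℝ) : ℂ) * Complex.I := by
          push_cast; ring
        rw [h2, Complex.exp_ofReal_mul_I_re]
        exact hx i
      simp only [hB, Finset.mem_image, Finset.mem_range] at ha hb hc hd
      obtain ⟨ka, hka, rfl⟩ := ha
      obtain ⟨kb, hkb, rfl⟩ := hb
      obtain ⟨kc, hkc, rfl⟩ := hc
      obtain ⟨kd, hkd, rfl⟩ := hd
      refine ⟨_, hgA (L * ka), _, hgA (L * kb), _, hgA (L * kc), _, hgA (L * kd), ?_⟩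
      apply hinjZ
      · have := hgb ka hka
        have := hgb kb hkb
        have := hgb kc hkc
        have := hgb kd hkd
        have h1 : (M : ℤ) ≤ L * M := by
          exact_mod_cast Nat.le_mul_of_pos_left M hL
        rw [abs_lt] at hxM ⊢
        constructor <;> linarith
      · rw [h]; push_cast; ring
  choose θ hθ hθA using key
  obtain ⟨t, -, φ, hφ, hlim⟩ := (isCompact_univ_pi fun _ : Fin (32 * L ^ 2) =>
    isCompact_Icc (a := (0 : ℝ)) (b := 1)).tendsto_subseq (x := θ) fun M i _ => hθ M i
  refine ⟨_, t, fun x hx => ?_⟩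
  have hev : ∀ i, ∀ᶠ m in atTop, 0 < Real.cos (2 * Real.pi * θ (φ m) i * x) := by
    intro i
    have h1 : Tendsto (fun m => θ (φ m) i) atTop (𝓝 (t i)) := (tendsto_pi_nhds.1 hlim) i
    have h2 : Tendsto (fun m => Real.cos (2 * Real.pi * θ (φ m) i * x)) atTop
        (𝓝 (Real.cos (2 * Real.pi * t i * x))) :=
      (Real.continuous_cos.tendsto _).comp ((h1.const_mul _).mul_const _)
    exact h2.eventually (lt_mem_nhds (hx i))
  obtain ⟨m, hm, hmx⟩ := ((eventually_all.2 hev).and (eventually_gt_atTop x.natAbs)).exists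
  refine hθA (φ m) x ?_ fun i => (hm i).le
  have := hφ.id_le m
  simp only [id] at this
  rw [Int.abs_eq_natAbs]
  omega

/-- The Bohr set `{x | dist(λ_l x, 2πℤ) ≤ δ for all l < k}`. -/
def BohrSet (lam : ℕ → ℝ) (k : ℕ) (δ : ℝ) : Set ℝ :=
  {x | ∀ l < k, ∃ m : ℤ, |lam l * x - 2 * Real.pi * m| ≤ δ}

/-- For relatively dense `A ⊆ ℝ`, the set `2A - 2A` meets every interval of radius `5h` around the
points of a suitable Bohr set. -/
theorem RelativelyDenseR.exists_bohrSet {A : Set ℝ} (hA : RelativelyDenseR A) {h : ℝ} (hh : 0 < h) :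
    ∃ (lam : ℕ → ℝ) (k : ℕ), ∃ δ > (0 : ℝ), ∀ x ∈ BohrSet lam k δ,
      ∃ a ∈ A, ∃ b ∈ A, ∃ c ∈ A, ∃ d ∈ A, |x - ((a - b) + (c - d))| ≤ 5 * h := by
  obtain ⟨l, hl, hA⟩ := hA
  set B : Set ℤ := {k | ∃ a ∈ A, |a - h * k| ≤ h} with hB
  have hBsynd : ∀ x : ℤ, ∃ b ∈ B, x ≤ b ∧ b < x + (⌈2 * l / h⌉₊ + 1 : ℕ) := by
    intro x
    obtain ⟨a, ha, hax⟩ := hA (h * x + l)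
    rw [abs_le] at hax
    have h1 : (⌊a / h⌋ : ℝ) * h ≤ a := (le_div_iff₀ hh).1 (Int.floor_le (a / h))
    have h2 : a < (⌊a / h⌋ + 1 : ℝ) * h := (div_lt_iff₀ hh).1 (Int.lt_floor_add_one (a / h))
    refine ⟨⌊a / h⌋, ⟨a, ha, ?_⟩, ?_, ?_⟩
    · rw [abs_le]
      constructor <;> linarith
    · rw [Int.le_floor, le_div_iff₀ hh]
      linarith
    · rw [Int.floor_lt, div_lt_iff₀ hh]
      push_cast
      have h3 : 2 * l ≤ ⌈2 * l / h⌉₊ * h := (div_le_iff₀ hh).1 (Nat.le_ceil _)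
      linarith
  obtain ⟨K, θ, hθ⟩ := Int.exists_bohr_subset_of_syndetic B _ (Nat.succ_pos _) hBsynd
  obtain ⟨C, hC⟩ : ∃ C : ℝ, ∀ i, |θ i| ≤ C := by
    refine ⟨∑ i, |θ i|, fun i => ?_⟩
    exact Finset.single_le_sum (f := fun i => |θ i|) (fun _ _ => abs_nonneg _) (Finset.mem_univ i)
  set δ : ℝ := min (1 / 2) (1 / (2 * (|C| + 1))) with hδ
  have hδpos : 0 < δ := by positivity
  have hδ1 : δ ≤ 1 / 2 := min_le_left _ _
  have hδ2 : (|C| + 1) * δ ≤ 1 / 2 := by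
    have : δ ≤ 1 / (2 * (|C| + 1)) := min_le_right _ _
    rw [le_div_iff₀ (by positivity)] at this
    linarith
  refine ⟨fun l => if hl : l < K then 2 * Real.pi * θ ⟨l, hl⟩ / h else 2 * Real.pi / h, K + 1,
    δ, hδpos, fun x hx => ?_⟩
  obtain ⟨m, hm⟩ := hx K (by omega)
  simp only [lt_irrefl, dite_false] at hm
  have hpi := Real.pi_gt_three
  have hxm : |2 * Real.pi * (x / h - m)| ≤ δ := by
    convert hm using 2; ring
  have hmB : ∃ a ∈ B, ∃ b ∈ B, ∃ c ∈ B, ∃ d ∈ B, m = a - b + (c - d) := by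
    refine hθ m fun i => ?_
    obtain ⟨p, hp⟩ := hx i (by omega)
    simp only [i.2, dite_true] at hp
    have hdiff : |2 * Real.pi * θ i * m - 2 * Real.pi * p| ≤ 1 := by
      have h1 : 2 * Real.pi * θ i * m - 2 * Real.pi * p =
          (2 * Real.pi * θ i / h * x - 2 * Real.pi * p) - θ i * (2 * Real.pi * (x / h - m)) := by
        ring
      have h2 : |θ i * (2 * Real.pi * (x / h - m))| ≤ 1 / 2 := by
        rw [abs_mul]
        refine le_trans (mul_le_mul ((hC i).trans ?_) hxm (abs_nonneg _) (by positivity)) hδ2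
        linarith [le_abs_self C]
      rw [h1]
      exact (abs_sub _ _).trans (by linarith)
    rw [abs_le] at hdiff
    rw [← Real.cos_sub_int_mul_two_pi _ p]
    apply Real.cos_pos_of_mem_Ioo
    constructor <;> linarith
  obtain ⟨a, ⟨a', ha, haa⟩, b, ⟨b', hb, hbb⟩, c, ⟨c', hc, hcc⟩, d, ⟨d', hd, hdd⟩, habcd⟩ := hmB
  refine ⟨a', ha, b', hb, c', hc, d', hd, ?_⟩
  have hxh : |x - h * m| ≤ h := by
    have h1 : x - h * m = h * (x / h - m) := by field_simp
    have h2 : |x / h - m| ≤ 1 := by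
      rw [abs_mul, abs_of_pos (by positivity)] at hxm
      nlinarith [abs_nonneg (x / h - m)]
    rw [h1, abs_mul, abs_of_pos hh]
    nlinarith
  have hm' : (m : ℝ) = a - b + (c - d) := by exact_mod_cast habcd
  rw [hm'] at hxh
  rw [abs_le] at *
  constructor <;> linarith

/-- Bohr sets are relatively dense. -/
theorem relativelyDenseR_bohrSet (lam : ℕ → ℝ) (k : ℕ) {δ : ℝ} (hδ : 0 < δ) :
    RelativelyDenseR (BohrSet lam k δ) := by
  have : Fact (0 < 2 * Real.pi) := ⟨Real.two_pi_pos⟩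
  set φ : ℝ → (Fin k → AddCircle (2 * Real.pi)) := fun x l => ((lam l * x : ℝ) : AddCircle _)
    with hφ
  have htb : TotallyBounded (Set.range φ) := isCompact_univ.totallyBounded.subset (Set.subset_univ _)
  obtain ⟨T, hT, hTfin, hcov⟩ := Metric.finite_approx_of_totallyBounded htb δ hδ
  choose! g hg using fun y (hy : y ∈ T) => hT hy
  obtain ⟨C, hC⟩ := (hTfin.image fun y => |g y|).bddAbove
  refine ⟨|C| + 1, by positivity, fun x => ?_⟩
  obtain ⟨y, hy, hxy⟩ := Set.mem_iUnion₂.1 (hcov ⟨x, rfl⟩)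
  refine ⟨x - g y, fun l hl => ?_, ?_⟩
  · have h1 : dist (φ x ⟨l, hl⟩) (φ (g y) ⟨l, hl⟩) < δ := by
      rw [hg y hy]
      exact (dist_le_pi_dist _ _ _).trans_lt hxy
    rw [dist_eq_norm, hφ, ← AddCircle.coe_sub, AddCircle.norm_eq] at h1
    refine ⟨round ((2 * Real.pi)⁻¹ * (lam l * x - lam l * g y)), le_trans (le_of_eq ?_) h1.le⟩
    congr 1
    ring
  · have : |g y| ≤ C := hC ⟨y, hy, rfl⟩
    rw [sub_sub_cancel_left, abs_neg]
    linarith [le_abs_self C]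

theorem BohrSet.add_mem {lam : ℕ → ℝ} {k : ℕ} {δ a b : ℝ} (ha : a ∈ BohrSet lam k (δ / 2))
    (hb : b ∈ BohrSet lam k (δ / 2)) : a + b ∈ BohrSet lam k δ := by
  intro l hl
  obtain ⟨p, hp⟩ := ha l hl
  obtain ⟨r, hr⟩ := hb l hl
  refine ⟨p + r, ?_⟩
  push_cast
  rw [abs_le] at *
  constructor <;> linarith

theorem BohrSet.neg_mem {lam : ℕ → ℝ} {k : ℕ} {δ a : ℝ} (ha : a ∈ BohrSet lam k δ) :
    -a ∈ BohrSet lam k δ := by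
  intro l hl
  obtain ⟨p, hp⟩ := ha l hl
  refine ⟨-p, ?_⟩
  push_cast
  rw [abs_le] at *
  constructor <;> linarith

theorem BohrSet.mono {lam : ℕ → ℝ} {k : ℕ} {δ δ' : ℝ} (h : δ ≤ δ') :
    BohrSet lam k δ ⊆ BohrSet lam k δ' := fun _ hx l hl =>
  (hx l hl).imp fun _ hm => hm.trans h

theorem EuclideanSpace.sum_single {n : ℕ} (v : EuclideanSpace ℝ (Fin n)) :
    ∑ j, EuclideanSpace.single j (v j) = v := by
  ext i
  simp

/-- A product of relatively dense subsets of `ℝ` is relatively dense in `ℝⁿ`. -/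
theorem relativelyDense_pi {n : ℕ} {E : Fin n → Set ℝ} (hE : ∀ j, RelativelyDenseR (E j)) :
    RelativelyDense {τ : EuclideanSpace ℝ (Fin n) | ∀ j, τ j ∈ E j} := by
  choose l hl hE using hE
  choose e heE he using hE
  have hl0 := Finset.sum_nonneg fun j (_ : j ∈ Finset.univ) => (hl j).le
  refine ⟨∑ j, l j + 1, by linarith,
    fun x => ⟨WithLp.toLp 2 fun j => e j (x j), fun j => heE j (x j), ?_⟩⟩
  rw [← EuclideanSpace.sum_single (WithLp.toLp 2 (fun j => e j (x j)) - x)]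
  refine (norm_sum_le _ _).trans ?_
  have : ∑ j, ‖EuclideanSpace.single j ((WithLp.toLp 2 (fun j => e j (x j)) - x) j)‖ ≤ ∑ j, l j := by
    refine Finset.sum_le_sum fun j _ => ?_
    simpa using he j (x j)
  linarith

theorem LevitanType1.stronglyLevitanNAP {n : ℕ} {X : Type*} [NormedAddCommGroup X]
    {F : EuclideanSpace ℝ (Fin n) → X} (h : LevitanType1 F) : StronglyLevitanNAP F := by
  obtain ⟨lam, h⟩ := h
  have key : ∀ N > (0 : ℝ), ∀ ε > (0 : ℝ), ∃ k : ℕ, ∃ δ > (0 : ℝ),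
      ∀ τ : EuclideanSpace ℝ (Fin n), (∀ j, τ j ∈ BohrSet (lam j) k δ) →
        τ ∈ AlmostPeriodSet F ε N := by
    intro N hN ε hε
    obtain ⟨k, δ, hδ, hk⟩ := h N hN ε hε
    exact ⟨k, δ, hδ, fun τ hτ => hk τ fun l hl j => hτ j l hl⟩
  refine ⟨fun ε hε N hN => ?_, fun N hN ε hε => ?_⟩
  · obtain ⟨k, δ, hδ, hk⟩ := key N hN ε hε
    obtain ⟨l, hl, hd⟩ := relativelyDense_pi fun j => relativelyDenseR_bohrSet (lam j) k hδ
    exact ⟨l, hl, fun x => (hd x).imp fun τ hτ => ⟨hk τ hτ.1, hτ.2⟩⟩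
  · obtain ⟨k, δ, hδ, hk⟩ := key N hN ε hε
    refine ⟨ε, hε, fun j => BohrSet (lam j) k (δ / 2),
      fun j => relativelyDenseR_bohrSet (lam j) k (half_pos hδ),
      fun τ hτ => hk τ fun j => BohrSet.mono (by linarith) (hτ j), fun a b ha hb => ⟨?_, ?_⟩⟩
    · exact hk _ fun j => BohrSet.add_mem (ha j) (hb j)
    · refine hk _ fun j => ?_
      rw [sub_eq_add_neg]
      exact BohrSet.add_mem (ha j) (BohrSet.neg_mem (hb j))

section TranslationInvariantNeighbourhoods

variable {G : Type*} [AddCommGroup G]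

/-- Let `U ε` be a decreasing family of symmetric neighbourhoods of `0` for a
translation-invariant topology on an abelian group. If every `U ε` contains `E - E` for a set `E`
finitely many translates of which cover the group, then addition is jointly continuous. -/
theorem exists_add_subset_of_semitopological {U : ℝ → Set G}
    (hmono : ∀ ⦃ε ε'⦄, 0 < ε → ε ≤ ε' → U ε ⊆ U ε') (hzero : ∀ ε > 0, (0 : G) ∈ U ε)
    (hneg : ∀ ε, ∀ x ∈ U ε, -x ∈ U ε)
    (hopen : ∀ ε > 0, ∀ z ∈ U (ε / 2), ∃ δ > 0, ∀ u ∈ U δ, z + u ∈ U ε)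
    (hclosed : ∀ ε > 0, ∀ z, ∃ δ > 0, ∀ u ∈ U δ, z + u ∈ U (ε / 2) → z ∈ U ε)
    (hcover : ∀ ε > 0, ∃ E : Set G, (∀ a ∈ E, ∀ b ∈ E, a - b ∈ U ε) ∧
      ∃ C : Finset G, ∀ x, ∃ c ∈ C, x - c ∈ E)
    (ε : ℝ) (hε : 0 < ε) : ∃ δ > 0, ∀ x ∈ U δ, ∀ y ∈ U δ, x + y ∈ U ε := by
  classical
  obtain ⟨E, hE, C, hC⟩ := hcover (ε / 2 / 2) (by positivity)
  set K : Set G := {x | ∀ δ > 0, ∃ u ∈ U δ, x + u ∈ E} with hK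
  have hKE : ∀ x ∈ K, ∀ e ∈ E, x - e ∈ U (ε / 2) := by
    intro x hx e he
    obtain ⟨δ, hδ, h⟩ := hclosed (ε / 2) (by positivity) (x - e)
    obtain ⟨u, hu, hxu⟩ := hx δ hδ
    exact h u hu (by simpa [sub_add_eq_add_sub] using hE _ hxu _ he)
  have hKK : ∀ x ∈ K, ∀ y ∈ K, x - y ∈ U ε := by
    intro x hx y hy
    obtain ⟨δ, hδ, h⟩ := hclosed ε hε (x - y)
    obtain ⟨u, hu, hyu⟩ := hy δ hδ
    refine h (-u) (hneg _ _ hu) ?_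
    have := hKE x hx _ hyu
    rwa [← sub_sub, sub_eq_add_neg] at this
  have hinterior : ∃ x, ∃ δ > 0, ∀ u ∈ U δ, x + u ∈ K := by
    by_contra! hcon
    have hmeagre : ∀ T : Finset G, ∃ x, ∃ δ > 0, ∀ u ∈ U δ, ∀ c ∈ T, x + u - c ∉ E := by
      intro T
      induction T using Finset.induction_on with
      | empty => exact ⟨0, 1, one_pos, by simp⟩
      | insert c T _ ih =>
        obtain ⟨x, δ, hδ, hx⟩ := ih
        obtain ⟨u, hu, huK⟩ := hcon (x - c) (δ / 2) (by positivity)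
        obtain ⟨δ₁, hδ₁, h₁⟩ := hopen δ hδ u hu
        simp only [hK, Set.mem_ofPred_eq] at huK
        push Not at huK
        obtain ⟨δ₂, hδ₂, h₂⟩ := huK
        refine ⟨x + u, min δ₁ δ₂, by positivity, fun v hv d hd => ?_⟩
        rcases Finset.mem_insert.1 hd with rfl | hd
        · have := h₂ v (hmono (by positivity) (min_le_right _ _) hv)
          rwa [show x - d + u + v = x + u + v - d by abel] at this
        · have := hx (u + v) (h₁ v (hmono (by positivity) (min_le_left _ _) hv)) d hd
          rwa [← add_assoc] at this
    obtain ⟨x, δ, hδ, hx⟩ := hmeagre C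
    obtain ⟨c, hc, hxc⟩ := hC x
    exact hx 0 (hzero δ hδ) c hc (by simpa using hxc)
  obtain ⟨x, δ, hδ, hx⟩ := hinterior
  refine ⟨δ, hδ, fun u hu v hv => ?_⟩
  have := hKK _ (hx u hu) _ (hx _ (hneg _ _ hv))
  rwa [show x + u - (x + -v) = u + v by abel] at this

theorem exists_sum_mem_of_exists_add_mem {U : ℝ → Set G} {ι : Type*}
    (hmono : ∀ ⦃ε ε'⦄, 0 < ε → ε ≤ ε' → U ε ⊆ U ε') (hzero : ∀ ε > 0, (0 : G) ∈ U ε)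
    (hadd : ∀ ε > 0, ∃ δ > 0, ∀ x ∈ U δ, ∀ y ∈ U δ, x + y ∈ U ε) (s : Finset ι) :
    ∀ ε > 0, ∃ δ > 0, ∀ f : ι → G, (∀ i, f i ∈ U δ) → ∑ i ∈ s, f i ∈ U ε := by
  classical
  induction s using Finset.induction_on with
  | empty => exact fun ε hε => ⟨1, one_pos, fun f _ => by simpa using hzero ε hε⟩
  | insert i s his ih =>
    intro ε hε
    obtain ⟨δ, hδ, h⟩ := hadd ε hε
    obtain ⟨δ', hδ', h'⟩ := ih δ hδ
    refine ⟨min δ δ', by positivity, fun f hf => ?_⟩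
    rw [Finset.sum_insert his]
    exact h _ (hmono (by positivity) (min_le_left _ _) (hf i)) _
      (h' f fun j => hmono (by positivity) (min_le_right _ _) (hf j))

end TranslationInvariantNeighbourhoods

/-- The `τ` such that both `τ` and `-τ` are `(ε, 1/ε)`-almost periods of `F`. -/
def SymmAlmostPeriodSet {n : ℕ} {X : Type*} [NormedAddCommGroup X]
    (F : EuclideanSpace ℝ (Fin n) → X) (ε : ℝ) : Set (EuclideanSpace ℝ (Fin n)) :=
  {τ | τ ∈ AlmostPeriodSet F ε (1 / ε) ∧ -τ ∈ AlmostPeriodSet F ε (1 / ε)}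

section AlmostPeriods

variable {n : ℕ} {X : Type*} [NormedAddCommGroup X] {F : EuclideanSpace ℝ (Fin n) → X}

theorem AlmostPeriodSet.mono {ε ε' N N' : ℝ} (hε : ε ≤ ε') (hN : N' ≤ N) :
    AlmostPeriodSet F ε N ⊆ AlmostPeriodSet F ε' N' :=
  fun _ hτ t ht => (hτ t (ht.trans hN)).trans hε

theorem AlmostPeriodSet.add_mem {ε δ N N' : ℝ} {z u : EuclideanSpace ℝ (Fin n)}
    (hz : z ∈ AlmostPeriodSet F ε N) (hu : u ∈ AlmostPeriodSet F δ N') (hN : N + ‖z‖ ≤ N') :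
    z + u ∈ AlmostPeriodSet F (ε + δ) N := by
  intro t ht
  have h1 := hu (t + z) ((norm_add_le _ _).trans (by linarith))
  have h2 := hz t ht
  rw [add_assoc] at h1
  have := norm_add_le (F (t + (z + u)) - F (t + z)) (F (t + z) - F t)
  rw [sub_add_sub_cancel] at this
  linarith

theorem AlmostPeriodSet.of_add_mem {ε δ N N' : ℝ} {z u : EuclideanSpace ℝ (Fin n)}
    (hz : z + u ∈ AlmostPeriodSet F ε N) (hu : u ∈ AlmostPeriodSet F δ N') (hN : N + ‖z‖ ≤ N') :
    z ∈ AlmostPeriodSet F (ε + δ) N := by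
  intro t ht
  have h1 := hu (t + z) ((norm_add_le _ _).trans (by linarith))
  have h2 := hz t ht
  rw [add_assoc] at h1
  have := norm_sub_le (F (t + (z + u)) - F t) (F (t + (z + u)) - F (t + z))
  rw [sub_sub_sub_cancel_left] at this
  linarith

theorem SymmAlmostPeriodSet.mono ⦃ε ε' : ℝ⦄ (hε : 0 < ε) (h : ε ≤ ε') :
    SymmAlmostPeriodSet F ε ⊆ SymmAlmostPeriodSet F ε' :=
  have hN := one_div_le_one_div_of_le hε h
  fun _ hτ => ⟨AlmostPeriodSet.mono h hN hτ.1, AlmostPeriodSet.mono h hN hτ.2⟩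

theorem SymmAlmostPeriodSet.zero_mem (ε : ℝ) (hε : 0 < ε) :
    (0 : EuclideanSpace ℝ (Fin n)) ∈ SymmAlmostPeriodSet F ε := by
  constructor <;> intro t _ <;> simpa using hε.le

theorem SymmAlmostPeriodSet.neg_mem (ε : ℝ) (x : EuclideanSpace ℝ (Fin n))
    (hx : x ∈ SymmAlmostPeriodSet F ε) : -x ∈ SymmAlmostPeriodSet F ε :=
  ⟨hx.2, by simpa using hx.1⟩

theorem exists_pos_le_and_le_one_div {ε : ℝ} (hε : 0 < ε) (M : ℝ) :
    ∃ δ > 0, δ ≤ ε ∧ M ≤ 1 / δ := by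
  refine ⟨min ε (1 / (|M| + 1)), by positivity, min_le_left _ _, ?_⟩
  rw [le_div_iff₀ (by positivity)]
  have h1 : min ε (1 / (|M| + 1)) ≤ 1 / (|M| + 1) := min_le_right _ _
  rw [le_div_iff₀ (by positivity)] at h1
  have h2 : 0 < min ε (1 / (|M| + 1)) := by positivity
  nlinarith [le_abs_self M]

theorem SymmAlmostPeriodSet.exists_add_mem (ε : ℝ) (hε : 0 < ε) (z : EuclideanSpace ℝ (Fin n))
    (hz : z ∈ SymmAlmostPeriodSet F (ε / 2)) :
    ∃ δ > 0, ∀ u ∈ SymmAlmostPeriodSet F δ, z + u ∈ SymmAlmostPeriodSet F ε := by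
  obtain ⟨δ, hδ, hδε, hδN⟩ := exists_pos_le_and_le_one_div (half_pos hε) (1 / (ε / 2) + ‖z‖)
  have hN : 1 / ε ≤ 1 / (ε / 2) := one_div_le_one_div_of_le (by positivity) (by linarith)
  refine ⟨δ, hδ, fun u hu => ⟨?_, ?_⟩⟩
  · refine AlmostPeriodSet.mono ?_ hN (AlmostPeriodSet.add_mem hz.1 hu.1 hδN)
    linarith
  · rw [neg_add]
    refine AlmostPeriodSet.mono ?_ hN (AlmostPeriodSet.add_mem hz.2 hu.2 (by rwa [norm_neg]))
    linarith

theorem SymmAlmostPeriodSet.exists_of_add_mem (ε : ℝ) (hε : 0 < ε)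
    (z : EuclideanSpace ℝ (Fin n)) :
    ∃ δ > 0, ∀ u ∈ SymmAlmostPeriodSet F δ, z + u ∈ SymmAlmostPeriodSet F (ε / 2) →
      z ∈ SymmAlmostPeriodSet F ε := by
  obtain ⟨δ, hδ, hδε, hδN⟩ := exists_pos_le_and_le_one_div (half_pos hε) (1 / (ε / 2) + ‖z‖)
  have hN : 1 / ε ≤ 1 / (ε / 2) := one_div_le_one_div_of_le (by positivity) (by linarith)
  refine ⟨δ, hδ, fun u hu hzu => ⟨?_, ?_⟩⟩
  · refine AlmostPeriodSet.mono ?_ hN (AlmostPeriodSet.of_add_mem hzu.1 hu.1 hδN)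
    linarith
  · have h := hzu.2
    rw [neg_add] at h
    refine AlmostPeriodSet.mono ?_ hN (AlmostPeriodSet.of_add_mem h hu.2 (by rwa [norm_neg]))
    linarith

theorem SymmAlmostPeriodSet.exists_thickening_subset (hF : Continuous F) {ε : ℝ} (hε : 0 < ε) :
    ∃ δ > 0, ∃ s > 0, ∀ z ∈ SymmAlmostPeriodSet F δ, ∀ u, ‖u‖ < s →
      z + u ∈ SymmAlmostPeriodSet F ε := by
  obtain ⟨δ, hδ, hδε, hδN⟩ := exists_pos_le_and_le_one_div (half_pos hε) (1 / ε + 1)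
  have huc := (isCompact_closedBall (0 : EuclideanSpace ℝ (Fin n)) (1 / ε + 1))
    |>.uniformContinuousOn_of_continuous hF.continuousOn
  obtain ⟨s, hs, hsF⟩ := Metric.uniformContinuousOn_iff.1 huc (ε / 2) (half_pos hε)
  have key : ∀ z ∈ AlmostPeriodSet F δ (1 / δ), ∀ u, ‖u‖ < min s 1 →
      z + u ∈ AlmostPeriodSet F ε (1 / ε) := by
    intro z hz u hu t ht
    have hu1 : ‖u‖ < 1 := hu.trans_le (min_le_right _ _)
    have hus : ‖u‖ < s := hu.trans_le (min_le_left _ _)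
    have htu : ‖t + u‖ ≤ 1 / ε + 1 := (norm_add_le _ _).trans (by linarith)
    have h1 := hz (t + u) (htu.trans hδN)
    have h2 := hsF (t + u) (by simpa using htu) t
      (mem_closedBall_zero_iff.2 (by linarith)) (by simpa [dist_eq_norm] using hus)
    rw [dist_eq_norm] at h2
    have := norm_add_le (F (t + u + z) - F (t + u)) (F (t + u) - F t)
    rw [sub_add_sub_cancel, add_assoc, add_comm u] at this
    rw [add_assoc, add_comm u] at h1
    linarith
  refine ⟨δ, hδ, min s 1, by positivity, fun z hz u hu => ⟨key z hz.1 u hu, ?_⟩⟩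
  rw [neg_add]
  exact key _ hz.2 _ (by rwa [norm_neg])

theorem StronglyLevitanNAP.exists_sub_mem (h : StronglyLevitanNAP F) {ε : ℝ} (hε : 0 < ε) :
    ∃ E : Fin n → Set ℝ, (∀ j, RelativelyDenseR (E j)) ∧
      ∀ a b : EuclideanSpace ℝ (Fin n), (∀ j, a j ∈ E j) → (∀ j, b j ∈ E j) →
        a - b ∈ SymmAlmostPeriodSet F ε := by
  obtain ⟨-, -, E, hE, -, hEE⟩ := h.2 (1 / ε) (by positivity) ε hε
  exact ⟨E, hE, fun a b ha hb =>
    ⟨(hEE a b ha hb).2, by rw [neg_sub]; exact (hEE b a hb ha).2⟩⟩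

theorem StronglyLevitanNAP.exists_cover (h : StronglyLevitanNAP F) (hF : Continuous F)
    (ε : ℝ) (hε : 0 < ε) : ∃ E : Set (EuclideanSpace ℝ (Fin n)),
      (∀ a ∈ E, ∀ b ∈ E, a - b ∈ SymmAlmostPeriodSet F ε) ∧
      ∃ C : Finset (EuclideanSpace ℝ (Fin n)), ∀ x, ∃ c ∈ C, x - c ∈ E := by
  obtain ⟨δ, hδ, s, hs, hthick⟩ := SymmAlmostPeriodSet.exists_thickening_subset hF hε
  obtain ⟨E, hE, hEE⟩ := h.exists_sub_mem hδ
  obtain ⟨l, hl, hdense⟩ := relativelyDense_pi hE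
  obtain ⟨C, -, hCfin, hC⟩ := finite_cover_balls_of_compact
    (isCompact_closedBall (0 : EuclideanSpace ℝ (Fin n)) l) (half_pos hs)
  refine ⟨{x | ∃ e : EuclideanSpace ℝ (Fin n), (∀ j, e j ∈ E j) ∧ ‖x - e‖ < s / 2}, ?_,
    hCfin.toFinset, fun x => ?_⟩
  · rintro a ⟨e, he, hae⟩ b ⟨e', he', hbe⟩
    have := hthick _ (hEE e e' he he') ((a - e) - (b - e'))
      ((norm_sub_le _ _).trans_lt (by linarith))
    rwa [show e - e' + (a - e - (b - e')) = a - b by abel] at this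
  · obtain ⟨e, he, hex⟩ := hdense x
    obtain ⟨c, hc, hxc⟩ := Set.mem_iUnion₂.1 (hC (show x - e ∈ Metric.closedBall 0 l by
      rwa [mem_closedBall_zero_iff, norm_sub_rev]))
    refine ⟨c, hCfin.mem_toFinset.2 hc, e, he, ?_⟩
    rwa [Metric.mem_ball, dist_eq_norm, sub_right_comm] at hxc

theorem StronglyLevitanNAP.exists_add_subset (h : StronglyLevitanNAP F) (hF : Continuous F)
    (ε : ℝ) (hε : 0 < ε) : ∃ δ > 0, ∀ x ∈ SymmAlmostPeriodSet F δ,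
      ∀ y ∈ SymmAlmostPeriodSet F δ, x + y ∈ SymmAlmostPeriodSet F ε :=
  exists_add_subset_of_semitopological SymmAlmostPeriodSet.mono SymmAlmostPeriodSet.zero_mem
    SymmAlmostPeriodSet.neg_mem SymmAlmostPeriodSet.exists_add_mem
    SymmAlmostPeriodSet.exists_of_add_mem (h.exists_cover hF) ε hε

/-- On each coordinate axis the almost periods contain a Bohr set. -/
theorem StronglyLevitanNAP.exists_bohrSet_axis (h : StronglyLevitanNAP F) (hF : Continuous F)
    {ε : ℝ} (hε : 0 < ε) (j : Fin n) : ∃ (lam : ℕ → ℝ) (k : ℕ), ∃ δ > (0 : ℝ),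
      ∀ x ∈ BohrSet lam k δ, EuclideanSpace.single j x ∈ SymmAlmostPeriodSet F ε := by
  obtain ⟨ε₁, hε₁, s, hs, hthick⟩ := SymmAlmostPeriodSet.exists_thickening_subset hF hε
  obtain ⟨ε₂, hε₂, hadd⟩ := h.exists_add_subset hF ε₁ hε₁
  obtain ⟨E, hE, hEE⟩ := h.exists_sub_mem hε₂
  obtain ⟨lam, k, δ, hδ, hB⟩ := (hE j).exists_bohrSet (h := s / 10) (by positivity)
  have hne : ∀ i, ∃ e, e ∈ E i := fun i => by
    obtain ⟨l, -, hl⟩ := hE i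
    exact (hl 0).imp fun e he => he.1
  choose e he using hne
  have haxis : ∀ a ∈ E j, ∀ b ∈ E j,
      EuclideanSpace.single j (a - b) ∈ SymmAlmostPeriodSet F ε₂ := by
    intro a ha b hb
    have hupd : ∀ a ∈ E j, ∀ i, Function.update e j a i ∈ E i := by
      intro a ha i
      rcases eq_or_ne i j with rfl | hij
      · simpa using ha
      · simpa [hij] using he i
    convert hEE (WithLp.toLp 2 (Function.update e j a)) (WithLp.toLp 2 (Function.update e j b))
      (hupd a ha) (hupd b hb) using 1
    ext i
    rcases eq_or_ne i j with rfl | hij <;> simp [*]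
  refine ⟨lam, k, δ, hδ, fun x hx => ?_⟩
  obtain ⟨a, ha, b, hb, c, hc, d, hd, hx⟩ := hB x hx
  have hsum := hadd _ (haxis a ha b hb) _ (haxis c hc d hd)
  have := hthick _ hsum (EuclideanSpace.single j (x - ((a - b) + (c - d)))) (by
    rw [PiLp.norm_single, Real.norm_eq_abs]
    linarith)
  convert this using 1
  ext i
  rcases eq_or_ne i j with rfl | hij <;> simp [*]

theorem StronglyLevitanNAP.levitanType1 (h : StronglyLevitanNAP F) (hF : Continuous F) :
    LevitanType1 F := by
  have haxis := fun (j : Fin n) (m : ℕ) =>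
    h.exists_bohrSet_axis hF (Nat.one_div_pos_of_nat (α := ℝ) (n := m)) j
  choose lam k δ hδ hB using haxis
  refine ⟨fun j p => lam j p.unpair.1 p.unpair.2, fun N hN ε hε => ?_⟩
  obtain ⟨ε₁, hε₁, hε₁ε, hNε₁⟩ := exists_pos_le_and_le_one_div hε N
  obtain ⟨ε₂, hε₂, hsum⟩ := exists_sum_mem_of_exists_add_mem (ι := Fin n)
    SymmAlmostPeriodSet.mono SymmAlmostPeriodSet.zero_mem (h.exists_add_subset hF)
    Finset.univ ε₁ hε₁
  obtain ⟨m, hm⟩ := exists_nat_one_div_lt hε₂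
  obtain ⟨δ₀, hδ₀, hδ₀le⟩ : ∃ δ₀ > 0, ∀ j, δ₀ ≤ δ j m := by
    have := eventually_all.2 fun j => Ioc_mem_nhdsGT (hδ j m)
    obtain ⟨d, hd, hd0⟩ := (this.and self_mem_nhdsWithin).exists
    exact ⟨d, hd0, fun j => (hd j).2⟩
  refine ⟨Nat.pair m (∑ j, k j m), δ₀, hδ₀, fun τ hτ => ?_⟩
  suffices hmem : τ ∈ SymmAlmostPeriodSet F ε₁ from AlmostPeriodSet.mono hε₁ε hNε₁ hmem.1
  rw [← EuclideanSpace.sum_single τ]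
  refine hsum _ fun j => SymmAlmostPeriodSet.mono Nat.one_div_pos_of_nat hm.le ?_
  refine hB j m _ fun l hl => ?_
  have hlk : l < ∑ j, k j m :=
    hl.trans_le (Finset.single_le_sum (f := fun j => k j m) (fun _ _ => Nat.zero_le _)
      (Finset.mem_univ j))
  obtain ⟨p, hp⟩ := hτ (Nat.pair m l) (Nat.pair_lt_pair_right m hlk) j
  refine ⟨p, ?_⟩
  simp only [Nat.unpair_pair] at hp
  exact hp.trans (hδ₀le j)

end AlmostPeriods

/-- A continuous `F : ℝⁿ → X` is Levitan `N`-almost periodic of type `1` if and only if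
it is strongly Levitan `N`-almost periodic. -/
theorem stmt8 {n : ℕ} {X : Type*} [NormedAddCommGroup X] [NormedSpace ℂ X]
    [CompleteSpace X] (F : EuclideanSpace ℝ (Fin n) → X) (hF : Continuous F) :
    LevitanType1 F ↔ StronglyLevitanNAP F := by
  exact ⟨LevitanType1.stronglyLevitanNAP, fun h => h.levitanType1 hF⟩
end
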